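/- For any δ ∈ (0,1] and any integers m > n ≥ 2, the sequence C_{k,δ} = Σ_{j=2}^k (log j)^{δ-1}/j − (log k)^δ/δ satisfies (log m)^{δ-1}/m − (log n)^{δ-1}/n < C_{m,δ} − C_{n,δ} < 0. -/

import Mathlib

/-!
The summand `f x = (log x)^(δ-1) / x` is strictly decreasing on `(1, ∞)` and has the
antiderivative `F x = (log x)^δ / δ` there. By the mean value theorem
`f (k+1) < F (k+1) - F k < f k` (`antideriv_step`), so each increment
`C_{k+1} - C_k = f (k+1) - (F (k+1) - F k)` lies strictly between `f (k+1) - f k` and `0`.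
Both bounds telescope from `n` to `m`.
-/

open Filter Real

lemma summand_lt {δ : ℝ} (hδ1 : δ ≤ 1) {x y : ℝ} (hx : 1 < x) (hxy : x < y) :
    (Real.log y) ^ (δ - 1) / y < (Real.log x) ^ (δ - 1) / x := by
  have hlx : 0 < Real.log x := Real.log_pos hx
  have hle : Real.log x ≤ Real.log y := Real.log_le_log (by linarith) hxy.le
  have hpow : (Real.log y) ^ (δ - 1) ≤ (Real.log x) ^ (δ - 1) :=
    Real.rpow_le_rpow_of_nonpos hlx hle (by linarith)
  have hpos : 0 < (Real.log x) ^ (δ - 1) := Real.rpow_pos_of_pos hlx _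
  exact div_lt_div₀' hpow hxy hpos (by linarith)

lemma hasDerivAt_antideriv {δ : ℝ} (hδ0 : 0 < δ) {x : ℝ} (hx : 1 < x) :
    HasDerivAt (fun t : ℝ => (Real.log t) ^ δ / δ) ((Real.log x) ^ (δ - 1) / x) x := by
  have hlx : 0 < Real.log x := Real.log_pos hx
  have h := ((Real.hasDerivAt_log (by linarith : x ≠ 0)).rpow_const
    (p := δ) (Or.inl hlx.ne')).div_const δ
  have heq : x⁻¹ * δ * (Real.log x) ^ (δ - 1) / δ = (Real.log x) ^ (δ - 1) / x := by
    rw [mul_right_comm, mul_div_assoc, div_self hδ0.ne', mul_one, mul_comm, div_eq_mul_inv]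
  exact heq ▸ h

/-- Mean value theorem on `[x, x + 1]`: the increment of the antiderivative equals the summand
at an interior point, hence lies strictly between its endpoint values. -/
lemma antideriv_step {δ : ℝ} (hδ0 : 0 < δ) (hδ1 : δ ≤ 1) {x : ℝ} (hx : 1 < x) :
    (Real.log (x + 1)) ^ (δ - 1) / (x + 1)
        < (Real.log (x + 1)) ^ δ / δ - (Real.log x) ^ δ / δ ∧
      (Real.log (x + 1)) ^ δ / δ - (Real.log x) ^ δ / δ < (Real.log x) ^ (δ - 1) / x := by
  obtain ⟨c, ⟨hxc, hcx⟩, hc⟩ := exists_hasDerivAt_eq_slope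
    (fun t : ℝ => (Real.log t) ^ δ / δ) (fun t : ℝ => (Real.log t) ^ (δ - 1) / t)
    (lt_add_one x)
    (fun t ht => (hasDerivAt_antideriv hδ0 (hx.trans_le ht.1)).continuousAt.continuousWithinAt)
    (fun t ht => hasDerivAt_antideriv hδ0 (hx.trans ht.1))
  rw [add_sub_cancel_left, div_one] at hc
  rw [← hc]
  exact ⟨summand_lt hδ1 (hx.trans hxc) hcx, summand_lt hδ1 hx hxc⟩

/-- For `δ ∈ (0,1]` and integers `m > n ≥ 2`,
`(log m)^{δ-1}/m − (log n)^{δ-1}/n < C_{m,δ} − C_{n,δ} < 0`. -/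
theorem C_delta_difference (δ : ℝ) (hδ0 : 0 < δ) (hδ1 : δ ≤ 1)
    (m n : ℕ) (hn : 2 ≤ n) (hmn : n < m) :
    (Real.log (m : ℝ)) ^ (δ - 1) / (m : ℝ) - (Real.log (n : ℝ)) ^ (δ - 1) / (n : ℝ)
      < ((∑ j ∈ Finset.Icc 2 m, (Real.log (j : ℝ)) ^ (δ - 1) / (j : ℝ))
          - (Real.log (m : ℝ)) ^ δ / δ)
        - ((∑ j ∈ Finset.Icc 2 n, (Real.log (j : ℝ)) ^ (δ - 1) / (j : ℝ))
          - (Real.log (n : ℝ)) ^ δ / δ) ∧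
    ((∑ j ∈ Finset.Icc 2 m, (Real.log (j : ℝ)) ^ (δ - 1) / (j : ℝ))
        - (Real.log (m : ℝ)) ^ δ / δ)
      - ((∑ j ∈ Finset.Icc 2 n, (Real.log (j : ℝ)) ^ (δ - 1) / (j : ℝ))
        - (Real.log (n : ℝ)) ^ δ / δ) < 0 := by
  induction m, hmn using Nat.le_induction with
  | base =>
    have hn1 : (1 : ℝ) < n := by exact_mod_cast hn
    obtain ⟨h1, h2⟩ := antideriv_step hδ0 hδ1 hn1
    rw [Nat.succ_eq_add_one, Finset.sum_Icc_succ_top (by omega)]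
    push_cast
    constructor <;> linarith
  | succ k hk ih =>
    have hk1 : (1 : ℝ) < k := by exact_mod_cast (by omega : 1 < k)
    obtain ⟨h1, h2⟩ := antideriv_step hδ0 hδ1 hk1
    obtain ⟨ih1, ih2⟩ := ih
    rw [Finset.sum_Icc_succ_top (by omega : 2 ≤ k + 1)]
    push_cast
    constructor <;> linarith
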